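/- Let p be a prime, F a field of characteristic p, n a positive integer, and r, s positive integers with r ≤ p^n, s ≤ p^n and r + s > p^n. Suppose the Kronecker product J_r ⊗ J_s is similar over F to the block-diagonal matrix with diagonal blocks J_{λ_1},…,J_{λ_b}, where b = min(r,s) and λ_1 ≥ ⋯ ≥ λ_b > 0. Then the largest part λ_1 equals p^n, and the number of indices i with λ_i = p^n is exactly r + s − p^n. -/

import Mathlib

/-!
The Jordan block `J_r` is conjugate to its inverse: the signed Pascal matrix `P` satisfies
`J_r P J_r = P`. Writing `K = J_r ⊗ 1`, `L = 1 ⊗ J_s` and `U = P ⊗ 1`, this gives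
`(K L - 1) ^ k U = K ^ k U (L - K) ^ k`, so `(J_r ⊗ J_s - 1) ^ k` has the same rank as the `k`-th
power of `1 ⊗ N_s - N_r ⊗ 1`, where `N_m = J_m - 1`. In characteristic `p`, with `q = p ^ n`, the
identities `(x - y) ^ q = x ^ q - y ^ q` and `(x - y) ^ (q - 1) = ∑ i < q, x ^ i y ^ (q - 1 - i)`
for commuting `x`, `y` yield rank `0` for `k = q` and rank `r + s - q` for `k = q - 1`. A direct sum
of Jordan blocks of sizes `d i` has rank `∑ i, (d i - k)` instead, so no block is larger than `q`
and exactly `r + s - q` of them have size `q`.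
-/

open Kronecker

/-- The `m × m` Jordan block with eigenvalue `1`: ones on the main diagonal and the
superdiagonal, zeros elsewhere. -/
def jordanBlock (F : Type*) [Zero F] [One F] (m : ℕ) : Matrix (Fin m) (Fin m) F :=
  Matrix.of fun i j => if (j : ℕ) = (i : ℕ) ∨ (j : ℕ) = (i : ℕ) + 1 then 1 else 0

/-- The block-diagonal matrix whose diagonal blocks are the Jordan blocks `J_{d i}`, `i : ι`. -/
def jordanBlockDiag (F : Type*) [Field F] {ι : Type} [DecidableEq ι] (d : ι → ℕ) :
    Matrix ((i : ι) × Fin (d i)) ((i : ι) × Fin (d i)) F :=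
  Matrix.blockDiagonal' fun i => jordanBlock F (d i)

/-- Similarity of square matrices, possibly indexed by different (finite) types:
both matrices represent the same linear endomorphism up to a linear change of basis. -/
def MatSimilar (F : Type*) [Field F] {n m : Type*} [Fintype n] [Fintype m]
    (A : Matrix n n F) (B : Matrix m m F) : Prop :=
  ∃ e : (n → F) ≃ₗ[F] (m → F), ∀ v, e (A.mulVec v) = B.mulVec (e v)

section MatchingMatrix

variable {R α β γ : Type*} [DecidableEq γ]

/-- The 0-1 matrix of the relation `φ x = ψ y`. The powers of nilpotent Jordan blocks have this
form, and its rank is a cardinality. -/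
def matchingMatrix (R : Type*) [Zero R] [One R] (φ : α → γ) (ψ : β → γ) : Matrix α β R :=
  Matrix.of fun x y => if φ x = ψ y then 1 else 0

theorem matchingMatrix_apply [Zero R] [One R] (φ : α → γ) (ψ : β → γ) (x : α) (y : β) :
    matchingMatrix R φ ψ x y = if φ x = ψ y then 1 else 0 := rfl

variable [CommSemiring R]

theorem matchingMatrix_coe_mul_matchingMatrix_coe {φ : α → γ} {ψ : β → γ} {T : Finset γ}
    (hT : ∀ x y, φ x = ψ y → φ x ∈ T) :
    matchingMatrix R φ ((↑) : T → γ) * matchingMatrix R ((↑) : T → γ) ψ =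
      matchingMatrix R φ ψ := by
  ext x y
  simp only [Matrix.mul_apply, matchingMatrix_apply, ite_mul, one_mul, zero_mul]
  rw [Finset.sum_coe_sort T fun t => if φ x = t then (if t = ψ y then (1 : R) else 0) else 0,
    Finset.sum_ite_eq]
  grind

theorem rank_matchingMatrix [StrongRankCondition R] [Fintype α] [Fintype β]
    (φ : α → γ) (ψ : β → γ) :
    (matchingMatrix R φ ψ).rank = (Finset.univ.image φ ∩ Finset.univ.image ψ).card := by
  set T := Finset.univ.image φ ∩ Finset.univ.image ψ
  apply le_antisymm
  · have hφψ (x : α) (y : β) (h : φ x = ψ y) : φ x ∈ T :=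
      Finset.mem_inter.2 ⟨Finset.mem_image_of_mem φ (Finset.mem_univ x),
        h ▸ Finset.mem_image_of_mem ψ (Finset.mem_univ y)⟩
    calc (matchingMatrix R φ ψ).rank
        ≤ (matchingMatrix R φ ((↑) : T → γ)).rank := by
          rw [← matchingMatrix_coe_mul_matchingMatrix_coe hφψ]
          exact Matrix.rank_mul_le_left _ _
      _ ≤ T.card := (Matrix.rank_le_card_width _).trans_eq (Fintype.card_coe T)
  · have exists_φ (t : T) : ∃ x, φ x = t := by simpa using (Finset.mem_inter.1 t.2).1
    have exists_ψ (t : T) : ∃ y, ψ y = t := by simpa using (Finset.mem_inter.1 t.2).2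
    choose f hf using exists_φ
    choose g hg using exists_ψ
    have submatrix_eq_one : (matchingMatrix R φ ψ).submatrix f g = 1 := by
      ext t t'
      simp only [Matrix.submatrix_apply, matchingMatrix_apply, hf, hg, Matrix.one_apply,
        Subtype.ext_iff]
    calc T.card = ((matchingMatrix R φ ψ).submatrix f g).rank := by
          rw [submatrix_eq_one, Matrix.rank_one, Fintype.card_coe]
      _ ≤ (matchingMatrix R φ ψ).rank := Matrix.rank_submatrix_le _ _ _

end MatchingMatrix

section Ring

variable {R : Type*} [Ring R]

theorem cast_choose_prime_pow_sub_one {p : ℕ} [hp : Fact p.Prime] [CharP R p] {n k : ℕ}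
    (hk : k < p ^ n) : ((p ^ n - 1).choose k : R) = (-1) ^ k := by
  induction k with
  | zero => simp
  | succ k ih =>
    have pascal : (p ^ n).choose (k + 1) = (p ^ n - 1).choose k + (p ^ n - 1).choose (k + 1) := by
      rw [← Nat.choose_succ_succ, Nat.succ_eq_add_one, Nat.sub_add_cancel (by lia)]
    have vanish : ((p ^ n).choose (k + 1) : R) = 0 := by
      obtain ⟨c, hc⟩ := hp.out.dvd_choose_pow k.succ_ne_zero hk.ne
      rw [hc, Nat.cast_mul, CharP.cast_eq_zero, zero_mul]
    rw [pascal, Nat.cast_add, ih (by lia)] at vanish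
    rw [pow_succ, mul_neg_one, ← eq_neg_of_add_eq_zero_right vanish]

theorem sub_pow_prime_pow_sub_one_of_commute (p : ℕ) [hp : Fact p.Prime] [CharP R p] (n : ℕ)
    {x y : R} (h : Commute x y) :
    (x - y) ^ (p ^ n - 1) = ∑ i ∈ Finset.range (p ^ n), x ^ i * y ^ (p ^ n - 1 - i) := by
  have hq : p ^ n - 1 + 1 = p ^ n := Nat.sub_add_cancel (Nat.pow_pos hp.out.pos)
  rw [sub_eq_add_neg, h.neg_right.add_pow, hq]
  refine Finset.sum_congr rfl fun i hi => ?_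
  have hi' : i ≤ p ^ n - 1 := Nat.le_sub_one_of_lt (Finset.mem_range.1 hi)
  rw [← Nat.choose_symm hi', cast_choose_prime_pow_sub_one (p := p) (by lia), mul_assoc,
    ← (Commute.neg_one_right (-y)).mul_pow, mul_neg_one, neg_neg]

theorem mul_sub_one_pow_mul {a b u : R} (hab : Commute a b) (hbu : Commute b u)
    (hu : a * u * a = u) (k : ℕ) : (a * b - 1) ^ k * u = a ^ k * u * (b - a) ^ k := by
  have step : (a * b - 1) * u = a * u * (b - a) := by
    rw [mul_sub, hu, sub_mul, one_mul, mul_assoc, hbu.eq, mul_assoc]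
  induction k with
  | zero => simp
  | succ k ih =>
    have comm : Commute (a * b - 1) (a ^ k) :=
      (((Commute.refl a).mul_left hab.symm).sub_left (Commute.one_left a)).pow_right k
    calc (a * b - 1) ^ (k + 1) * u
        = (a * b - 1) * a ^ k * u * (b - a) ^ k := by
          rw [pow_succ', mul_assoc, ih]
          simp only [mul_assoc]
      _ = a ^ k * ((a * b - 1) * u) * (b - a) ^ k := by rw [comm.eq, mul_assoc (a ^ k)]
      _ = a ^ (k + 1) * u * (b - a) ^ (k + 1) := by
          rw [step, pow_succ, pow_succ']
          simp only [mul_assoc]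

end Ring

section JordanBlock

variable {R : Type*}

/-- The nilpotent part `J_m - 1` of the Jordan block: ones on the superdiagonal. -/
def shiftMatrix (R : Type*) [Zero R] [One R] (m : ℕ) : Matrix (Fin m) (Fin m) R :=
  Matrix.of fun i j => if (i : ℕ) + 1 = j then 1 else 0

theorem jordanBlock_eq_one_add_shiftMatrix [AddMonoidWithOne R] (m : ℕ) :
    jordanBlock R m = 1 + shiftMatrix R m := by
  ext i j
  simp only [jordanBlock, shiftMatrix, Matrix.add_apply, Matrix.one_apply, Matrix.of_apply,
    Fin.ext_iff]
  split_ifs <;> first | lia | simp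

theorem sum_shiftMatrix_mul [NonAssocSemiring R] {m : ℕ} (i : Fin m) (f : ℕ → R) (hf : f m = 0) :
    ∑ j, shiftMatrix R m i j * f j = f (i + 1) := by
  simp only [shiftMatrix, Matrix.of_apply, ite_mul, one_mul, zero_mul]
  rw [Fin.sum_univ_eq_sum_range (fun j => if (i : ℕ) + 1 = j then f j else 0), Finset.sum_ite_eq]
  split_ifs with h
  · rfl
  · rw [show (i : ℕ) + 1 = m by grind, hf]

theorem shiftMatrix_pow [Semiring R] (m k : ℕ) :
    shiftMatrix R m ^ k = matchingMatrix R (fun i : Fin m => (i : ℕ) + k) Fin.val := by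
  induction k with
  | zero => ext; simp [matchingMatrix_apply, Matrix.one_apply, Fin.ext_iff]
  | succ k ih =>
    ext i j
    rw [pow_succ', ih, Matrix.mul_apply]
    simp only [matchingMatrix_apply]
    rw [sum_shiftMatrix_mul i (fun l => if l + k = j then 1 else 0) (if_neg (by lia))]
    grind

theorem shiftMatrix_pow_eq_zero [Semiring R] {m k : ℕ} (h : m ≤ k) : shiftMatrix R m ^ k = 0 := by
  ext i j
  rw [shiftMatrix_pow, matchingMatrix_apply, if_neg (by lia), Matrix.zero_apply]

theorem isUnit_jordanBlock [Ring R] (m : ℕ) : IsUnit (jordanBlock R m) := by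
  rw [jordanBlock_eq_one_add_shiftMatrix]
  exact IsNilpotent.isUnit_one_add ⟨m, shiftMatrix_pow_eq_zero le_rfl⟩

variable [CommRing R]

/-- The matrix of the reflection `f(x) ↦ f(-1 - x)` in the basis of binomial polynomials
`x.choose j`. In this basis `jordanBlock` is the translation `f(x) ↦ f(x + 1)`, which the reflection
conjugates to its inverse. -/
def signedPascalMatrix (R : Type*) [Ring R] (m : ℕ) : Matrix (Fin m) (Fin m) R :=
  Matrix.of fun i j => (-1) ^ (j : ℕ) * ((j : ℕ).choose i : R)

theorem isUnit_signedPascalMatrix (m : ℕ) : IsUnit (signedPascalMatrix R m) := by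
  have triangular : (signedPascalMatrix R m).IsUpperTriangular := fun i j hij => by
    simp [signedPascalMatrix, Nat.choose_eq_zero_of_lt (show (j : ℕ) < i from hij)]
  rw [Matrix.isUnit_iff_isUnit_det, Matrix.det_of_isUpperTriangular triangular,
    IsUnit.prod_univ_iff]
  intro i
  simpa [signedPascalMatrix] using (isUnit_one (M := R)).neg.pow i

theorem jordanBlock_mul_signedPascalMatrix (m : ℕ) :
    jordanBlock R m * signedPascalMatrix R m =
      Matrix.of fun i j : Fin m => (-1) ^ (j : ℕ) * ((j + 1 : ℕ).choose (i + 1) : R) := by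
  ext i j
  rw [jordanBlock_eq_one_add_shiftMatrix, add_mul, one_mul, Matrix.add_apply, Matrix.mul_apply]
  simp only [signedPascalMatrix, Matrix.of_apply]
  rw [sum_shiftMatrix_mul i (fun l => (-1) ^ (j : ℕ) * ((j : ℕ).choose l : R))
    (by simp [Nat.choose_eq_zero_of_lt j.2]), Nat.choose_succ_succ]
  push_cast
  ring

theorem jordanBlock_mul_signedPascalMatrix_mul_jordanBlock (m : ℕ) :
    jordanBlock R m * signedPascalMatrix R m * jordanBlock R m = signedPascalMatrix R m := by
  rw [jordanBlock_mul_signedPascalMatrix, jordanBlock_eq_one_add_shiftMatrix, mul_add, mul_one]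
  ext i ⟨j, hj⟩
  simp only [Matrix.add_apply, Matrix.mul_apply, signedPascalMatrix, shiftMatrix, Matrix.of_apply,
    mul_ite, mul_one, mul_zero]
  rw [Fin.sum_univ_eq_sum_range
    (fun l => if l + 1 = j then (-1) ^ l * ((l + 1).choose (i + 1) : R) else 0)]
  cases j with
  | zero => simp [Nat.choose_succ_succ]
  | succ j =>
    simp only [Nat.add_right_cancel_iff, Finset.sum_ite_eq', Finset.mem_range,
      if_pos (show j < m by lia)]
    rw [Nat.choose_succ_succ (j + 1)]
    push_cast
    ring

end JordanBlock

section KroneckerPowers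

variable {R : Type*} [CommSemiring R] {l m : Type*} [Fintype l] [DecidableEq l] [Fintype m]
  [DecidableEq m]

theorem kronecker_pow (A : Matrix l l R) (B : Matrix m m R) (k : ℕ) :
    (A ⊗ₖ B) ^ k = (A ^ k) ⊗ₖ (B ^ k) := by
  induction k with
  | zero => simp
  | succ k ih => rw [pow_succ, ih, ← Matrix.mul_kronecker_mul, ← pow_succ, ← pow_succ]

theorem commute_kronecker_one_one_kronecker (A : Matrix l l R) (B : Matrix m m R) :
    Commute (A ⊗ₖ (1 : Matrix m m R)) ((1 : Matrix l l R) ⊗ₖ B) := by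
  simp only [Commute, SemiconjBy, ← Matrix.mul_kronecker_mul, mul_one, one_mul]

theorem sum_one_kronecker_shiftMatrix_pow_mul {q r s : ℕ} (hr : r ≤ q) (hs : s ≤ q) :
    ∑ i ∈ Finset.range q,
        ((1 : Matrix (Fin r) (Fin r) R) ⊗ₖ shiftMatrix R s) ^ i *
          (shiftMatrix R r ⊗ₖ (1 : Matrix (Fin s) (Fin s) R)) ^ (q - 1 - i) =
      matchingMatrix R (fun x : Fin r × Fin s => (x.1 + x.2 + (q - 1) : ℕ))
        (fun y : Fin r × Fin s => (y.1 + y.2 : ℕ)) := by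
  ext ⟨a, c⟩ ⟨b, d⟩
  simp only [kronecker_pow, one_pow, ← Matrix.mul_kronecker_mul, one_mul, mul_one, shiftMatrix_pow,
    Matrix.sum_apply, Matrix.kroneckerMap_apply, matchingMatrix_apply, ← ite_and, mul_ite, mul_zero]
  by_cases h : (a + c + (q - 1) : ℕ) = b + d
  · rw [if_pos h, Finset.sum_eq_single (d - c : ℕ)] <;> grind
  · rw [if_neg h]
    exact Finset.sum_eq_zero (by grind)

theorem image_add_inter_image_eq_Ico {q r s : ℕ} (hr : r ≤ q) (hs : s ≤ q) :
    Finset.univ.image (fun x : Fin r × Fin s => (x.1 + x.2 + (q - 1) : ℕ)) ∩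
      Finset.univ.image (fun y : Fin r × Fin s => (y.1 + y.2 : ℕ)) =
      Finset.Ico (q - 1) (r + s - 1) := by
  ext t
  simp only [Finset.mem_inter, Finset.mem_image, Finset.mem_univ, true_and, Prod.exists,
    Finset.mem_Ico]
  constructor
  · rintro ⟨⟨a, c, rfl⟩, b, d, hbd⟩
    lia
  · intro ht
    exact ⟨⟨⟨t - (q - 1), by lia⟩, ⟨0, by lia⟩, by grind⟩,
      ⟨⟨r - 1, by lia⟩, ⟨t - (r - 1), by lia⟩, by grind⟩⟩

end KroneckerPowers

section ShiftDifference

variable {R : Type*} [CommRing R]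

/-- The difference `1 ⊗ N_s - N_r ⊗ 1`, where `N_m` is the nilpotent part of the Jordan block
`J_m`. It replaces `J_r ⊗ J_s - 1`, whose powers have the same ranks but less explicit entries. -/
def shiftDifference (R : Type*) [CommRing R] (r s : ℕ) :
    Matrix (Fin r × Fin s) (Fin r × Fin s) R :=
  1 ⊗ₖ shiftMatrix R s - shiftMatrix R r ⊗ₖ 1

theorem shiftDifference_eq_jordanBlock_sub (r s : ℕ) :
    shiftDifference R r s = 1 ⊗ₖ jordanBlock R s - jordanBlock R r ⊗ₖ 1 := by
  simp only [shiftDifference, jordanBlock_eq_one_add_shiftMatrix, Matrix.kronecker_add,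
    Matrix.add_kronecker]
  abel

theorem rank_jordanBlock_kronecker_sub_one_pow (r s k : ℕ) :
    ((jordanBlock R r ⊗ₖ jordanBlock R s - 1) ^ k).rank = (shiftDifference R r s ^ k).rank := by
  rw [shiftDifference_eq_jordanBlock_sub]
  set K : Matrix (Fin r × Fin s) (Fin r × Fin s) R := jordanBlock R r ⊗ₖ 1 with hK
  set L : Matrix (Fin r × Fin s) (Fin r × Fin s) R := 1 ⊗ₖ jordanBlock R s with hL
  set U : Matrix (Fin r × Fin s) (Fin r × Fin s) R := signedPascalMatrix R r ⊗ₖ 1 with hU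
  have hKL : jordanBlock R r ⊗ₖ jordanBlock R s = K * L := by
    rw [hK, hL, ← Matrix.mul_kronecker_mul, mul_one, one_mul]
  have hKUK : K * U * K = U := by
    simp only [hK, hU, ← Matrix.mul_kronecker_mul, mul_one,
      jordanBlock_mul_signedPascalMatrix_mul_jordanBlock]
  have intertwine : (K * L - 1) ^ k * U = K ^ k * U * (L - K) ^ k :=
    mul_sub_one_pow_mul (commute_kronecker_one_one_kronecker _ _)
      (commute_kronecker_one_one_kronecker _ _).symm hKUK k
  have unitU : IsUnit U := Matrix.IsUnit.kronecker (isUnit_signedPascalMatrix r) isUnit_one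
  have unitK : IsUnit K := Matrix.IsUnit.kronecker (isUnit_jordanBlock r) isUnit_one
  calc ((jordanBlock R r ⊗ₖ jordanBlock R s - 1) ^ k).rank
      = ((K * L - 1) ^ k * U).rank := by
        rw [hKL, Matrix.rank_mul_eq_left_of_isUnit_det]
        exact (Matrix.isUnit_iff_isUnit_det _).1 unitU
    _ = ((L - K) ^ k).rank := by
        rw [intertwine, Matrix.rank_mul_eq_right_of_isUnit_det]
        exact (Matrix.isUnit_iff_isUnit_det _).1 ((unitK.pow k).mul unitU)

variable {p : ℕ} [hp : Fact p.Prime] [CharP R p]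

theorem shiftDifference_pow_prime_pow {n r s : ℕ} (hr : r ≤ p ^ n) (hs : s ≤ p ^ n) :
    shiftDifference R r s ^ p ^ n = 0 := by
  obtain _ | _ := isEmpty_or_nonempty (Fin r × Fin s)
  · exact Subsingleton.elim _ _
  rw [shiftDifference, sub_pow_char_pow_of_commute p n
    (commute_kronecker_one_one_kronecker _ _).symm, kronecker_pow, kronecker_pow,
    shiftMatrix_pow_eq_zero hr, shiftMatrix_pow_eq_zero hs, Matrix.kronecker_zero,
    Matrix.zero_kronecker, sub_zero]

theorem shiftDifference_pow_prime_pow_sub_one {n r s : ℕ} (hr : r ≤ p ^ n) (hs : s ≤ p ^ n) :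
    shiftDifference R r s ^ (p ^ n - 1) =
      matchingMatrix R (fun x : Fin r × Fin s => (x.1 + x.2 + (p ^ n - 1) : ℕ))
        (fun y : Fin r × Fin s => (y.1 + y.2 : ℕ)) := by
  obtain _ | _ := isEmpty_or_nonempty (Fin r × Fin s)
  · exact Subsingleton.elim _ _
  rw [← sum_one_kronecker_shiftMatrix_pow_mul hr hs]
  exact sub_pow_prime_pow_sub_one_of_commute p n (commute_kronecker_one_one_kronecker _ _).symm

theorem rank_jordanBlock_kronecker_sub_one_pow_prime_pow {n r s : ℕ} (hr : r ≤ p ^ n)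
    (hs : s ≤ p ^ n) : ((jordanBlock R r ⊗ₖ jordanBlock R s - 1) ^ p ^ n).rank = 0 := by
  have : Nontrivial R := CharP.nontrivial_of_char_ne_one hp.out.ne_one
  rw [rank_jordanBlock_kronecker_sub_one_pow, shiftDifference_pow_prime_pow hr hs,
    Matrix.rank_zero]

theorem rank_jordanBlock_kronecker_sub_one_pow_prime_pow_sub_one {n r s : ℕ} (hr : r ≤ p ^ n)
    (hs : s ≤ p ^ n) :
    ((jordanBlock R r ⊗ₖ jordanBlock R s - 1) ^ (p ^ n - 1)).rank = r + s - p ^ n := by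
  have : Nontrivial R := CharP.nontrivial_of_char_ne_one hp.out.ne_one
  have hq : 0 < p ^ n := Nat.pow_pos hp.out.pos
  rw [rank_jordanBlock_kronecker_sub_one_pow, shiftDifference_pow_prime_pow_sub_one hr hs,
    rank_matchingMatrix, image_add_inter_image_eq_Ico hr hs, Nat.card_Ico]
  lia

end ShiftDifference

section JordanBlockDiag

variable {F : Type*} [Field F] {ι : Type} [Fintype ι] [DecidableEq ι] (d : ι → ℕ)

theorem jordanBlockDiag_sub_one_pow (k : ℕ) :
    (jordanBlockDiag F d - 1) ^ k =
      matchingMatrix F (fun x : (i : ι) × Fin (d i) => (⟨x.1, x.2 + k⟩ : (_ : ι) × ℕ))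
        (fun y : (i : ι) × Fin (d i) => (⟨y.1, y.2⟩ : (_ : ι) × ℕ)) := by
  have blocks : jordanBlockDiag F d - 1 = Matrix.blockDiagonal' fun i => shiftMatrix F (d i) := by
    rw [jordanBlockDiag, ← Matrix.blockDiagonal'_one, ← Matrix.blockDiagonal'_sub]
    congr 1
    funext i
    simp [jordanBlock_eq_one_add_shiftMatrix]
  rw [blocks, ← Matrix.blockDiagonal'_pow]
  ext ⟨i, a⟩ ⟨j, b⟩
  rw [matchingMatrix_apply]
  obtain rfl | hij := eq_or_ne i j
  · simp [shiftMatrix_pow, matchingMatrix_apply]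
  · simp [Matrix.blockDiagonal'_apply_ne _ _ _ hij, hij]

theorem rank_jordanBlockDiag_sub_one_pow (k : ℕ) :
    ((jordanBlockDiag F d - 1) ^ k).rank = ∑ i, (d i - k) := by
  have image_inter_image :
      Finset.univ.image (fun x : (i : ι) × Fin (d i) => (⟨x.1, x.2 + k⟩ : (_ : ι) × ℕ)) ∩
        Finset.univ.image (fun y : (i : ι) × Fin (d i) => (⟨y.1, y.2⟩ : (_ : ι) × ℕ)) =
      Finset.univ.sigma fun i => Finset.Ico k (d i) := by
    ext ⟨i, t⟩
    simp only [Finset.mem_inter, Finset.mem_image, Finset.mem_univ, true_and, Finset.mem_sigma,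
      Finset.mem_Ico]
    constructor
    · rintro ⟨⟨⟨_, a⟩, ⟨⟩⟩, ⟨⟨_, b⟩, hb⟩⟩
      grind
    · rintro ⟨hk, ht⟩
      exact ⟨⟨⟨i, t - k, by lia⟩, by simp [hk]⟩, ⟨⟨i, t, ht⟩, rfl⟩⟩
  rw [jordanBlockDiag_sub_one_pow, rank_matchingMatrix, image_inter_image, Finset.card_sigma]
  simp only [Nat.card_Ico]

end JordanBlockDiag

namespace MatSimilar

variable {F : Type*} [Field F] {l m : Type*} [Fintype l] [Fintype m] {A : Matrix l l F}
  {B : Matrix m m F}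

theorem rank_eq (h : MatSimilar F A B) : A.rank = B.rank := by
  obtain ⟨e, he⟩ := h
  have conj : B.mulVecLin ∘ₗ e.toLinearMap = e.toLinearMap ∘ₗ A.mulVecLin :=
    LinearMap.ext fun v => (he v).symm
  rw [Matrix.rank, Matrix.rank, ← LinearEquiv.finrank_map_eq e, ← LinearMap.range_comp, ← conj,
    LinearMap.range_comp_of_range_eq_top _ e.range]

theorem sub_one [DecidableEq l] [DecidableEq m] (h : MatSimilar F A B) :
    MatSimilar F (A - 1) (B - 1) := by
  obtain ⟨e, he⟩ := h
  exact ⟨e, fun v => by simp [Matrix.sub_mulVec, he]⟩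

theorem pow [DecidableEq l] [DecidableEq m] (h : MatSimilar F A B) (k : ℕ) :
    MatSimilar F (A ^ k) (B ^ k) := by
  obtain ⟨e, he⟩ := h
  refine ⟨e, ?_⟩
  induction k with
  | zero => simp
  | succ k ih => simp [pow_succ, ← Matrix.mulVec_mulVec, he, ih]

end MatSimilar

/-- For `r + s < p ^ n` the truncated difference is the true count: no block has size `p ^ n`. -/
theorem stmt_6_general {F : Type*} [Field F] {p : ℕ} (hp : p.Prime) [CharP F p] {n r s : ℕ}
    (hr : r ≤ p ^ n) (hs : s ≤ p ^ n) {ι : Type} [Fintype ι] [DecidableEq ι] {d : ι → ℕ}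
    (hsim : MatSimilar F (jordanBlock F r ⊗ₖ jordanBlock F s) (jordanBlockDiag F d)) :
    (∀ i, d i ≤ p ^ n) ∧ (Finset.univ.filter fun i => d i = p ^ n).card = r + s - p ^ n := by
  have : Fact p.Prime := ⟨hp⟩
  have rank_eq (k : ℕ) :
      ((jordanBlock F r ⊗ₖ jordanBlock F s - 1) ^ k).rank = ∑ i, (d i - k) :=
    (hsim.sub_one.pow k).rank_eq.trans (rank_jordanBlockDiag_sub_one_pow d k)
  have hle (i : ι) : d i ≤ p ^ n := by
    have sum_eq_zero : ∑ i, (d i - p ^ n) = 0 := by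
      rw [← rank_eq, rank_jordanBlock_kronecker_sub_one_pow_prime_pow hr hs]
    exact Nat.sub_eq_zero_iff_le.1 (Finset.sum_eq_zero_iff.1 sum_eq_zero i (Finset.mem_univ i))
  refine ⟨hle, ?_⟩
  have hq : 0 < p ^ n := Nat.pow_pos hp.pos
  rw [← rank_jordanBlock_kronecker_sub_one_pow_prime_pow_sub_one (R := F) hr hs, rank_eq,
    Finset.card_filter]
  refine Finset.sum_congr rfl fun i _ => ?_
  have := hle i
  split_ifs <;> lia

/-- If `r + s > pⁿ` (with `r, s ≤ pⁿ`), the largest part of the Jordan partition is `pⁿ`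
and it occurs with multiplicity `r + s − pⁿ`. -/
theorem stmt_6 {F : Type*} [Field F] (p : ℕ) (hp : p.Prime) [CharP F p]
    (n : ℕ) (hn : 0 < n) (r s : ℕ) (hr : 0 < r) (hs : 0 < s)
    (hr' : r ≤ p ^ n) (hs' : s ≤ p ^ n) (hrs : p ^ n < r + s)
    (b : ℕ) (hb : b = min r s)
    (lam : Fin b → ℕ) (hanti : Antitone lam) (hpos : ∀ i, 0 < lam i)
    (hsim : MatSimilar F (jordanBlock F r ⊗ₖ jordanBlock F s) (jordanBlockDiag F lam)) :
    lam ⟨0, by omega⟩ = p ^ n ∧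
    (Finset.univ.filter fun i => lam i = p ^ n).card = r + s - p ^ n := by
  subst hb
  obtain ⟨hle, hcard⟩ := stmt_6_general hp hr' hs' hsim
  obtain ⟨i, hi⟩ := Finset.card_pos.1 (hcard ▸ Nat.sub_pos_of_lt hrs)
  have hi' : lam i = p ^ n := (Finset.mem_filter.1 hi).2
  exact ⟨le_antisymm (hle _) (hi' ▸ hanti (Fin.mk_le_of_le_val i.val.zero_le)), hcard⟩
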